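/- arXiv:1810.06883 — 2 statements merged into one kernel-verified Lean document; each statement's English description precedes it below -/
import Mathlib

section
/- For all natural numbers n and m, (1/√(2π)) ∫_{-∞}^{∞} He_n(x) · He_m(x) · e^{-x²/2} dx equals n! if n = m and equals 0 if n ≠ m. Equivalently, if X is a standard Gaussian random variable, then E[He_n(X) · He_m(X)] = n! · δ_{n,m}. -/
open MeasureTheory ProbabilityTheory Polynomial Real Nat

/-!
The Gaussian weight `w(x) = e^{-x²/2}` satisfies `(q w)' = -(X q - q') w`, so the functional
`L(p) = ∫ p w` kills every polynomial of the form `X q - q'`. Taking `q = Heₙ p` and using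
`Heₙ₊₁ = X Heₙ - Heₙ'` gives the adjointness relation `L(Heₙ₊₁ p) = L(Heₙ p')`
(`gaussianFunctional_hermite_succ_mul`). Since `Heₘ₊₁' = (m + 1) Heₘ`
(`derivative_hermite_succ`), this yields `L(Heₙ₊₁ Heₘ₊₁) = (m + 1) L(Heₙ Heₘ)` and
`L(Heₙ₊₁ He₀) = 0`, and the formula follows by induction from `L(1) = √(2π)`.
-/

/-- The unnormalized Gaussian moment functional `p ↦ ∫ p(x) e^{-x²/2} dx`. -/
noncomputable def gaussianFunctional (p : ℤ[X]) : ℝ :=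
  ∫ x : ℝ, aeval x p * Real.exp (-x ^ 2 / 2)

lemma integrable_aeval_mul_exp (p : ℤ[X]) :
    Integrable fun x : ℝ => aeval x p * Real.exp (-x ^ 2 / 2) := by
  induction p using Polynomial.induction_on' with
  | add p q hp hq =>
    simp only [map_add, add_mul]
    exact hp.add hq
  | monomial k a =>
    have h := (integrable_rpow_mul_exp_neg_mul_sq (b := 1 / 2) (by norm_num)
      (s := (k : ℝ)) (by linarith [k.cast_nonneg (α := ℝ)])).const_mul (a : ℝ)
    refine h.congr (Filter.Eventually.of_forall fun x => ?_)
    simp only [aeval_monomial, Real.rpow_natCast, algebraMap_int_eq, eq_intCast, mul_assoc]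
    ring_nf

lemma gaussianFunctional_X_mul_sub_derivative (q : ℤ[X]) :
    gaussianFunctional (X * q - derivative q) = 0 := by
  have hderiv (x : ℝ) : HasDerivAt (fun x : ℝ => aeval x q * Real.exp (-x ^ 2 / 2))
      (-(aeval x (X * q - derivative q) * Real.exp (-x ^ 2 / 2))) x := by
    have hexp : HasDerivAt (fun x : ℝ => Real.exp (-x ^ 2 / 2))
        (Real.exp (-x ^ 2 / 2) * (-x)) x := by
      have h : HasDerivAt (fun x : ℝ => -x ^ 2 / 2) (-x) x := by
        refine ((hasDerivAt_pow 2 x).fun_neg.div_const 2).congr_deriv ?_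
        norm_num
        ring
      exact h.exp
    refine ((q.hasDerivAt_aeval x).fun_mul hexp).congr_deriv ?_
    simp only [map_sub, map_mul, aeval_X]
    ring
  have h := integral_eq_zero_of_hasDerivAt_of_integrable hderiv
    (integrable_aeval_mul_exp _).neg (integrable_aeval_mul_exp q)
  rw [integral_neg, neg_eq_zero] at h
  exact h

lemma derivative_hermite_succ (n : ℕ) :
    derivative (hermite (n + 1)) = ((n : ℤ[X]) + 1) * hermite n := by
  induction n with
  | zero => simp
  | succ n ih =>
    rw [hermite_succ (n + 1), ih]
    simp only [derivative_sub, derivative_mul, derivative_X, derivative_add, derivative_natCast,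
      derivative_one, ih]
    rw [hermite_succ n]
    push_cast
    ring

/-- Raising the Hermite index is adjoint to differentiation with respect to the Gaussian weight. -/
lemma gaussianFunctional_hermite_succ_mul (n : ℕ) (p : ℤ[X]) :
    gaussianFunctional (hermite (n + 1) * p) = gaussianFunctional (hermite n * derivative p) := by
  have h := gaussianFunctional_X_mul_sub_derivative (hermite n * p)
  have e : X * (hermite n * p) - derivative (hermite n * p) =
      hermite (n + 1) * p - hermite n * derivative p := by
    rw [hermite_succ, derivative_mul]
    ring
  rw [e] at h
  unfold gaussianFunctional at h ⊢
  simp only [map_sub, sub_mul] at h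
  rw [integral_sub (integrable_aeval_mul_exp _) (integrable_aeval_mul_exp _)] at h
  exact sub_eq_zero.mp h

lemma gaussianFunctional_one : gaussianFunctional 1 = √(2 * π) := by
  have h := integral_gaussian (1 / 2)
  rw [show π / (1 / 2) = 2 * π by ring] at h
  rw [← h, gaussianFunctional]
  congr 1
  ext x
  rw [map_one, one_mul]
  ring_nf

lemma gaussianFunctional_hermite_mul_hermite (n m : ℕ) :
    gaussianFunctional (hermite n * hermite m) = if n = m then √(2 * π) * n ! else 0 := by
  induction n generalizing m with
  | zero =>
    cases m with
    | zero => simp [gaussianFunctional_one]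
    | succ m =>
      rw [mul_comm, gaussianFunctional_hermite_succ_mul]
      simp [gaussianFunctional]
  | succ n ih =>
    rw [gaussianFunctional_hermite_succ_mul]
    cases m with
    | zero => simp [gaussianFunctional]
    | succ m =>
      have e : gaussianFunctional (hermite n * derivative (hermite (m + 1))) =
          (m + 1) * gaussianFunctional (hermite n * hermite m) := by
        rw [derivative_hermite_succ]
        unfold gaussianFunctional
        rw [← integral_const_mul]
        congr 1
        ext x
        simp only [map_mul, map_add, map_natCast, map_one]
        ring
      rw [e, ih]
      by_cases h : n = m
      · subst h
        simp [Nat.factorial_succ]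
        ring
      · simp [h]

/-- Orthogonality of the probabilist's Hermite polynomials with respect to the
standard Gaussian weight: `(1/√(2π)) ∫ Heₙ(x) Heₘ(x) e^{-x²/2} dx = n! δₙₘ`,
equivalently `E[Heₙ(X) Heₘ(X)] = n! δₙₘ` for a standard Gaussian `X`. -/
theorem hermite_orthogonal_gaussian (n m : ℕ) :
    ((1 / Real.sqrt (2 * Real.pi)) *
        ∫ x : ℝ, aeval x (hermite n) * aeval x (hermite m) * Real.exp (-x ^ 2 / 2) =
      if n = m then (n ! : ℝ) else 0) ∧
    (∫ x, aeval x (hermite n) * aeval x (hermite m) ∂(gaussianReal 0 1) =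
      if n = m then (n ! : ℝ) else 0) := by
  have key : (1 / Real.sqrt (2 * Real.pi)) *
        ∫ x : ℝ, aeval x (hermite n) * aeval x (hermite m) * Real.exp (-x ^ 2 / 2) =
      if n = m then (n ! : ℝ) else 0 := by
    have h := gaussianFunctional_hermite_mul_hermite n m
    simp only [gaussianFunctional, map_mul] at h
    rw [h]
    have hpos : √(2 * π) ≠ 0 := by positivity
    split_ifs
    · field_simp
    · simp
  refine ⟨key, ?_⟩
  rw [integral_gaussianReal_eq_integral_smul one_ne_zero, ← key, ← integral_const_mul]
  congr 1
  ext x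
  simp only [gaussianPDFReal, smul_eq_mul, NNReal.coe_one, mul_one, sub_zero, one_div]
  ring
end

section
/- Let X and Z be independent standard Gaussian random variables, let ρ ∈ [-1, 1], and set Y = ρ·X + √(1-ρ²)·Z, so that Y is standard Gaussian and E[X·Y] = ρ. Then for all natural numbers n and m, E[He_n(X) · He_m(Y)] = n! · ρ^n if n = m, and E[He_n(X) · He_m(Y)] = 0 if n ≠ m. -/
open MeasureTheory ProbabilityTheory Polynomial Real Nat

lemma memLp_eval_gaussian (p : ℝ[X]) (r : NNReal) :
    MemLp (fun x => p.eval x) r (gaussianReal 0 1) := by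
  induction p using Polynomial.induction_on generalizing r with
  | C a => simpa using memLp_const a
  | add p q hp hq =>
    simp only [eval_add]
    exact (hp r).add (hq r)
  | monomial n a h =>
    -- Hölder's inequality with exponents `2r, 2r`.
    have : ENNReal.HolderTriple ((2 * r : NNReal) : ENNReal) ((2 * r : NNReal) : ENNReal) r := by
      constructor
      push_cast
      rw [ENNReal.mul_inv (by simp) (by simp), ← add_mul, ENNReal.inv_two_add_inv_two, one_mul]
    have h2 := (memLp_id_gaussianReal (μ := 0) (v := 1) (2 * r)).mul' (h (2 * r)) (r := r)
    refine h2.ae_eq (Filter.Eventually.of_forall fun x => ?_)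
    simp [pow_succ, mul_assoc]

lemma integrable_eval_gaussian (p : ℝ[X]) :
    Integrable (fun x => p.eval x) (gaussianReal 0 1) := by
  simpa using memLp_one_iff_integrable.1 (memLp_eval_gaussian p 1)

lemma integrable_pdf_mul_eval (p : ℝ[X]) :
    Integrable (fun x => gaussianPDFReal 0 1 x * p.eval x) := by
  have h := integrable_eval_gaussian p
  rw [gaussianReal_of_var_ne_zero 0 one_ne_zero,
    integrable_withDensity_iff_integrable_smul' (measurable_gaussianPDF _ _)
      (ae_of_all _ fun _ => gaussianPDF_lt_top)] at h
  simpa [toReal_gaussianPDF] using h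

/-- Stein's identity for polynomials: `E[X p(X)] = E[p'(X)]`. -/
lemma integral_stein (p : ℝ[X]) :
    ∫ x, (X * p - derivative p).eval x ∂(gaussianReal 0 1) = 0 := by
  rw [integral_gaussianReal_eq_integral_smul one_ne_zero]
  have hder : ∀ x, HasDerivAt (fun x => -(gaussianPDFReal 0 1 x * p.eval x))
      (gaussianPDFReal 0 1 x * (X * p - derivative p).eval x) x := by
    intro x
    have h1 : HasDerivAt (fun x => gaussianPDFReal 0 1 x) (-x * gaussianPDFReal 0 1 x) x := by
      simp only [gaussianPDFReal]
      have h2 : HasDerivAt (fun x : ℝ => -(x - 0) ^ 2 / (2 * ((1 : NNReal) : ℝ))) (-x) x := by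
        have := (((hasDerivAt_id x).sub_const 0).pow 2).neg.div_const (2 * ((1 : NNReal) : ℝ))
        convert! this using 1
        simp
        ring
      convert! (h2.exp.const_mul _) using 1
      ring
    convert! (h1.mul (p.hasDerivAt x)).neg using 1
    simp
    ring
  exact integral_eq_zero_of_hasDerivAt_of_integrable hder (integrable_pdf_mul_eval _)
    (integrable_pdf_mul_eval p).neg

section

variable {Ω : Type*} [MeasurableSpace Ω] {μ : Measure Ω}

lemma memLp_eval_comp {W : Ω → ℝ} (hW : Measurable W) (hlaw : μ.map W = gaussianReal 0 1)
    (p : ℝ[X]) : MemLp (fun ω => p.eval (W ω)) 2 μ := by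
  have h := memLp_eval_gaussian p 2
  rw [← hlaw] at h
  exact h.comp_of_map hW.aemeasurable

lemma integrable_eval_mul_eval {V W : Ω → ℝ} (hV : Measurable V) (hW : Measurable W)
    (hVlaw : μ.map V = gaussianReal 0 1) (hWlaw : μ.map W = gaussianReal 0 1) (p q : ℝ[X]) :
    Integrable (fun ω => p.eval (V ω) * q.eval (W ω)) μ :=
  (memLp_eval_comp hV hVlaw p).integrable_mul (memLp_eval_comp hW hWlaw q)

lemma map_correlated [IsProbabilityMeasure μ] {U Z : Ω → ℝ} (hU : Measurable U)
    (hZ : Measurable Z) (hUlaw : μ.map U = gaussianReal 0 1) (hZlaw : μ.map Z = gaussianReal 0 1)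
    (hindep : IndepFun U Z μ) {ρ s : ℝ} (hs : ρ ^ 2 + s ^ 2 = 1) :
    μ.map (fun ω => ρ * U ω + s * Z ω) = gaussianReal 0 1 := by
  have h1 := (gaussianReal_const_mul ⟨hU.aemeasurable, hUlaw⟩ ρ).map_eq
  have h2 := (gaussianReal_const_mul ⟨hZ.aemeasurable, hZlaw⟩ s).map_eq
  have hi : IndepFun (fun ω => ρ * U ω) (fun ω => s * Z ω) μ :=
    hindep.comp (measurable_const_mul ρ) (measurable_const_mul s)
  have h := gaussianReal_add_gaussianReal_of_indepFun hi h1 h2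
  refine h.trans ?_
  congr 1
  · simp
  · ext
    simpa using hs

/-- Integration by parts in the variable `U` with `Z` frozen: the operator `p ↦ x p - p'` acting
on the factor in `U` is adjoint to `ρ` times differentiation of the factor in `ρ U + s Z`. -/
lemma integral_raise [IsProbabilityMeasure μ] {U Z : Ω → ℝ} (hU : Measurable U)
    (hZ : Measurable Z) (hUlaw : μ.map U = gaussianReal 0 1) (hZlaw : μ.map Z = gaussianReal 0 1)
    (hindep : IndepFun U Z μ) {ρ s : ℝ} (hs : ρ ^ 2 + s ^ 2 = 1) (p q : ℝ[X]) :
    ∫ ω, (X * p - derivative p).eval (U ω) * q.eval (ρ * U ω + s * Z ω) ∂μ =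
      ρ * ∫ ω, p.eval (U ω) * (derivative q).eval (ρ * U ω + s * Z ω) ∂μ := by
  have hY : Measurable fun ω => ρ * U ω + s * Z ω := by fun_prop
  have hYlaw := map_correlated hU hZ hUlaw hZlaw hindep hs
  have hi1 := integrable_eval_mul_eval hU hY hUlaw hYlaw (X * p - derivative p) q
  have hi2 := (integrable_eval_mul_eval hU hY hUlaw hYlaw p (derivative q)).const_mul ρ
  rw [← integral_const_mul, ← sub_eq_zero, ← integral_sub hi1 hi2]
  let F : ℝ × ℝ → ℝ := fun x => (X * p - derivative p).eval x.1 * q.eval (ρ * x.1 + s * x.2) -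
    ρ * (p.eval x.1 * (derivative q).eval (ρ * x.1 + s * x.2))
  have hFc : Continuous F := by fun_prop
  have hmap : μ.map (fun ω => (U ω, Z ω)) = (gaussianReal 0 1).prod (gaussianReal 0 1) := by
    rw [hindep.map_prod_eq_prod_map_map hU.aemeasurable hZ.aemeasurable, hUlaw, hZlaw]
  have hUZ : AEMeasurable (fun ω => (U ω, Z ω)) μ := (hU.prodMk hZ).aemeasurable
  have hFi : Integrable F ((gaussianReal 0 1).prod (gaussianReal 0 1)) := by
    rw [← hmap, integrable_map_measure hFc.aestronglyMeasurable hUZ]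
    exact hi1.sub hi2
  change ∫ ω, F (U ω, Z ω) ∂μ = 0
  rw [← integral_map hUZ hFc.aestronglyMeasurable, hmap, integral_prod_symm F hFi]
  refine integral_eq_zero_of_ae (Filter.Eventually.of_forall fun z => ?_)
  refine Eq.trans ?_ (integral_stein (p * q.comp (C ρ * X + C (s * z))))
  refine integral_congr_ae (Filter.Eventually.of_forall fun x => ?_)
  simp [F, derivative_comp]
  ring

end

/-- Mehler-type cross-correlation of Hermite polynomials: if `X, Z` are independent
standard Gaussians, `ρ ∈ [-1,1]` and `Y = ρX + √(1-ρ²)Z`, then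
`E[Heₙ(X) Heₘ(Y)] = n! ρⁿ δₙₘ`. -/
theorem hermite_cross_correlation {Ω : Type*} [MeasurableSpace Ω]
    (μ : Measure Ω) [IsProbabilityMeasure μ]
    (X Z : Ω → ℝ) (hXmeas : Measurable X) (hZmeas : Measurable Z)
    (hXlaw : μ.map X = gaussianReal 0 1) (hZlaw : μ.map Z = gaussianReal 0 1)
    (hindep : IndepFun X Z μ)
    (ρ : ℝ) (hρ : ρ ∈ Set.Icc (-1 : ℝ) 1)
    (Y : Ω → ℝ) (hY : Y = fun ω => ρ * X ω + Real.sqrt (1 - ρ ^ 2) * Z ω)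
    (n m : ℕ) :
    ∫ ω, aeval (X ω) (hermite n) * aeval (Y ω) (hermite m) ∂μ =
      if n = m then (n ! : ℝ) * ρ ^ n else 0 := by
  have hs : ρ ^ 2 + Real.sqrt (1 - ρ ^ 2) ^ 2 = 1 := by
    rw [Real.sq_sqrt (by nlinarith [hρ.1, hρ.2])]
    ring
  have hYlaw := map_correlated hXmeas hZmeas hXlaw hZlaw hindep hs
  have hraise := integral_raise hXmeas hZmeas hXlaw hZlaw hindep hs
  have hYmeas : Measurable Y := by
    rw [hY]
    fun_prop
  -- `H k` is the Hermite polynomial with real coefficients.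
  let H : ℕ → ℝ[X] := fun k => (hermite k).map (algebraMap ℤ ℝ)
  have hH : ∀ k x, aeval x (hermite k) = (H k).eval x := fun k x => (eval_map_algebraMap _ x).symm
  have hHsucc : ∀ k, H (k + 1) = Polynomial.X * H k - derivative (H k) := fun k => by
    simp [H, hermite_succ, derivative_map]
  have hHder : ∀ k, derivative (H (k + 1)) = ((k : ℝ[X]) + 1) * H k := fun k => by
    simp only [H, derivative_map, derivative_hermite_succ]
    simp
  have hH0 : H 0 = 1 := by simp [H]
  simp only [← hY] at hYlaw
  simp only [hH]
  replace hraise : ∀ p q : ℝ[X],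
      ∫ ω, (Polynomial.X * p - derivative p).eval (X ω) * q.eval (Y ω) ∂μ =
        ρ * ∫ ω, p.eval (X ω) * (derivative q).eval (Y ω) ∂μ := by
    intro p q
    rw [hY]
    exact hraise p q
  induction n generalizing m with
  | zero =>
    cases m with
    | zero => simp [hH0]
    | succ m =>
      have hmap := integral_map (μ := μ) hYmeas.aemeasurable (f := fun y => (H (m + 1)).eval y)
        (Polynomial.continuous _).aestronglyMeasurable
      rw [hYlaw, hHsucc, integral_stein, ← hHsucc] at hmap
      simp [hH0, ← hmap]
  | succ n ih =>
    rw [hHsucc, hraise]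
    cases m with
    | zero => simp [hH0]
    | succ m =>
      have : ∀ ω, (H n).eval (X ω) * (derivative (H (m + 1))).eval (Y ω) =
          ((m : ℝ) + 1) * ((H n).eval (X ω) * (H m).eval (Y ω)) := fun ω => by
        rw [hHder]
        simp
        ring
      simp only [this]
      rw [integral_const_mul, ih m]
      by_cases hnm : n = m
      · subst hnm
        simp [Nat.factorial_succ]
        ring
      · simp [hnm]
end
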